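/- Let H be a Hopf algebra over a field K, (B, π) a quantum subgroup of H, and (L, η) a left B-module, and let L' = { w ∈ H ⊗ L : for all b ∈ B, (R ⊗ η_b)(w) = (ι ⊗ η_b)(w) } where R = (id_H ⊗ π) ∘ Δ. Then the assignment φ_H(h ⊗ h' ⊗ w) = h' ⊗ (id_H ⊗ η_{π(h)})(w) for h, h' ∈ H and w ∈ L' (on pure tensors w = h'' ⊗ l, φ_H(h ⊗ h' ⊗ h'' ⊗ l) = h' ⊗ h'' ⊗ η(π(h) ⊗ l)) takes values in H ⊗ L' and defines a left H-module structure on H ⊗ L': φ_H(1 ⊗ z) = z and φ_H(h ⊗ φ_H(h' ⊗ z)) = φ_H(hh' ⊗ z) for all h, h' ∈ H and z ∈ H ⊗ L'. -/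

import Mathlib

open TensorProduct

/-- The subspace `L' = {w ∈ H ⊗ L : ∀ b ∈ B, (R ⊗ η_b)(w) = (ι ⊗ η_b)(w)}`, where
`R = (id_H ⊗ π) ∘ Δ`, `η_b(l) = η(b ⊗ l)` and `ι(h) = h ⊗ 1_B`. -/
noncomputable def inducedSubspace
    (K : Type*) [Field K]
    (H : Type*) [Ring H] [HopfAlgebra K H]
    (B : Type*) [Ring B] [Bialgebra K B]
    (π : H →ₐc[K] B)
    (L : Type*) [AddCommGroup L] [Module K L]
    (η : B ⊗[K] L →ₗ[K] L) : Submodule K (H ⊗[K] L) where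
  carrier := {w | ∀ b : B,
    TensorProduct.map
      ((TensorProduct.map (LinearMap.id : H →ₗ[K] H) (π : H →ₗ[K] B))
        ∘ₗ Coalgebra.comul)
      (η ∘ₗ TensorProduct.mk K B L b) w
    = TensorProduct.map ((TensorProduct.mk K H B).flip (1 : B))
        (η ∘ₗ TensorProduct.mk K B L b) w}
  add_mem' := by
    intro a b ha hb c
    simp only [Set.mem_setOf_eq] at *
    simp [map_add, ha c, hb c]
  zero_mem' := by
    intro b
    simp
  smul_mem' := by
    intro c w hw b
    simp only [Set.mem_setOf_eq] at *
    simp [map_smul, hw b]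

/-!
The operators `id_H ⊗ η_c` preserve `L'` because `η_b ∘ η_c = η_{bc}`: applying `R ⊗ η_b` or
`ι ⊗ η_b` after `id_H ⊗ η_c` gives `R ⊗ η_{bc}` or `ι ⊗ η_{bc}`, which agree on `L'`. So `L'` is a
`B`-submodule of `H ⊗ L`, hence an `H`-module through `π`, and `φ_H` is this action on the second
factor of `H ⊗ L'`.
-/

section ModuleAction

variable {K B L : Type*} [CommSemiring K] [Semiring B] [Algebra K B]
  [AddCommMonoid L] [Module K L]

/-- The representation `b ↦ η_b` of `B` on `L` given by a left `B`-module structure that is encoded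
as an action map `η : B ⊗ L → L`. -/
noncomputable def algHomOfAction (η : B ⊗[K] L →ₗ[K] L)
    (one_act : ∀ l : L, η ((1 : B) ⊗ₜ[K] l) = l)
    (act_act : ∀ (b b' : B) (l : L), η (b ⊗ₜ[K] η (b' ⊗ₜ[K] l)) = η ((b * b') ⊗ₜ[K] l)) :
    B →ₐ[K] Module.End K L :=
  AlgHom.ofLinearMap (TensorProduct.curry η) (LinearMap.ext one_act)
    fun b b' ↦ LinearMap.ext fun l ↦ (act_act b b' l).symm

/-- The subrepresentation of `ρ` on a submodule `p` that is stable under every `ρ b`. -/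
def subrepresentationAlgHom (ρ : B →ₐ[K] Module.End K L) (p : Submodule K L)
    (stable : ∀ b, ∀ x ∈ p, ρ b x ∈ p) : B →ₐ[K] Module.End K p :=
  AlgHom.ofLinearMap
    { toFun b := (ρ b).restrict (stable b)
      map_add' b c := by ext; simp
      map_smul' k b := by ext; simp }
    (by ext; simp) (fun b c ↦ by ext; simp)

theorem lift_algHom_one_tmul (ρ : B →ₐ[K] Module.End K L) (l : L) :
    TensorProduct.lift ρ.toLinearMap (1 ⊗ₜ[K] l) = l := by
  simp

theorem lift_algHom_tmul_lift_tmul (ρ : B →ₐ[K] Module.End K L) (b b' : B) (l : L) :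
    TensorProduct.lift ρ.toLinearMap (b ⊗ₜ[K] TensorProduct.lift ρ.toLinearMap (b' ⊗ₜ[K] l)) =
      TensorProduct.lift ρ.toLinearMap ((b * b') ⊗ₜ[K] l) := by
  simp

end ModuleAction

section TensorEqLocus

variable {K B L M N : Type*} [CommSemiring K] [AddCommMonoid L] [Module K L]
  [AddCommMonoid M] [Module K M] [AddCommMonoid N] [Module K N]

/-- The submodule of `M ⊗ L` on which `f ⊗ T b` and `g ⊗ T b` agree for every `b`. It is `L'` when
`f = R`, `g = ι` and `T b = η_b`. -/
def tensorEqLocus (f g : M →ₗ[K] N) (T : B → Module.End K L) : Submodule K (M ⊗[K] L) where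
  carrier := {w | ∀ b, TensorProduct.map f (T b) w = TensorProduct.map g (T b) w}
  add_mem' hv hw b := by rw [map_add, map_add, hv b, hw b]
  zero_mem' b := by rw [map_zero, map_zero]
  smul_mem' k w hw b := by rw [map_smul, map_smul, hw b]

theorem lTensor_mem_tensorEqLocus [Mul B] (f g : M →ₗ[K] N) (T : B →ₙ* Module.End K L) (c : B)
    {w : M ⊗[K] L} (hw : w ∈ tensorEqLocus f g T) :
    (T c).lTensor M w ∈ tensorEqLocus f g T := fun b ↦ by
  have map_lTensor (e : M →ₗ[K] N) :
      TensorProduct.map e (T b) ((T c).lTensor M w) = TensorProduct.map e (T (b * c)) w := by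
    rw [← LinearMap.comp_apply, LinearMap.map_comp_lTensor, map_mul, Module.End.mul_eq_comp]
  rw [map_lTensor, map_lTensor, hw (b * c)]

variable [Semiring B] [Algebra K B]

/-- The representation `b ↦ id_M ⊗ ρ b` of `B` on `tensorEqLocus f g ρ`. -/
noncomputable def tensorEqLocusAlgHom (f g : M →ₗ[K] N) (ρ : B →ₐ[K] Module.End K L) :
    B →ₐ[K] Module.End K (tensorEqLocus f g ρ) :=
  subrepresentationAlgHom ((Module.End.lTensorAlgHom K L M).comp ρ) (tensorEqLocus f g ρ)
    fun c _ hw ↦ lTensor_mem_tensorEqLocus f g (ρ : B →ₙ* Module.End K L) c hw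

theorem coe_tensorEqLocusAlgHom_apply (f g : M →ₗ[K] N) (ρ : B →ₐ[K] Module.End K L) (b : B)
    (w : tensorEqLocus f g ρ) :
    (tensorEqLocusAlgHom f g ρ b w : M ⊗[K] L) = (ρ b).lTensor M (w : M ⊗[K] L) :=
  rfl

theorem inducedSubspace_consistency_module_structure_general
    {A V : Type*} [Semiring A] [Algebra K A] [AddCommMonoid V] [Module K V]
    (π : A →ₐ[K] B) (ρ : B →ₐ[K] Module.End K L) (f g : M →ₗ[K] N) :
    ∃ φ : A ⊗[K] (V ⊗[K] tensorEqLocus f g ρ) →ₗ[K] V ⊗[K] tensorEqLocus f g ρ,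
      (∀ (a : A) (v : V) (w : tensorEqLocus f g ρ),
        (tensorEqLocus f g ρ).subtype.lTensor V (φ (a ⊗ₜ[K] (v ⊗ₜ[K] w))) =
          v ⊗ₜ[K] (ρ (π a)).lTensor M (w : M ⊗[K] L)) ∧
      (∀ z : V ⊗[K] tensorEqLocus f g ρ, φ ((1 : A) ⊗ₜ[K] z) = z) ∧
      (∀ (a a' : A) (z : V ⊗[K] tensorEqLocus f g ρ),
        φ (a ⊗ₜ[K] φ (a' ⊗ₜ[K] z)) = φ ((a * a') ⊗ₜ[K] z)) := by
  let σ : A →ₐ[K] Module.End K (V ⊗[K] tensorEqLocus f g ρ) :=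
    (Module.End.lTensorAlgHom K _ V).comp ((tensorEqLocusAlgHom f g ρ).comp π)
  refine ⟨TensorProduct.lift σ.toLinearMap, fun a v w ↦ ?_, lift_algHom_one_tmul σ,
    lift_algHom_tmul_lift_tmul σ⟩
  have σ_tmul : σ a (v ⊗ₜ[K] w) = v ⊗ₜ[K] tensorEqLocusAlgHom f g ρ (π a) w := rfl
  rw [TensorProduct.lift.tmul, AlgHom.toLinearMap_apply, σ_tmul, LinearMap.lTensor_tmul,
    Submodule.subtype_apply, coe_tensorEqLocusAlgHom_apply]

end TensorEqLocus

/-- The assignment `φ_H(h ⊗ h' ⊗ w) = h' ⊗ (id_H ⊗ η_{π(h)})(w)` takes values in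
`H ⊗ L'` and defines a left `H`-module structure on `H ⊗ L'`. -/
theorem inducedSubspace_consistency_module_structure
    (K : Type*) [Field K]
    (H : Type*) [Ring H] [HopfAlgebra K H]
    (B : Type*) [Ring B] [Bialgebra K B]
    (π : H →ₐc[K] B) (hπ : Function.Surjective π)
    (L : Type*) [AddCommGroup L] [Module K L]
    (η : B ⊗[K] L →ₗ[K] L)
    (hη1 : ∀ l : L, η ((1 : B) ⊗ₜ[K] l) = l)
    (hη2 : ∀ (b b' : B) (l : L),
      η (b ⊗ₜ[K] η (b' ⊗ₜ[K] l)) = η ((b * b') ⊗ₜ[K] l)) :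
    ∃ φH : H ⊗[K] (H ⊗[K] (inducedSubspace K H B π L η)) →ₗ[K]
        H ⊗[K] (inducedSubspace K H B π L η),
      -- φ_H is given by φ_H(h ⊗ h' ⊗ w) = h' ⊗ (id_H ⊗ η_{π(h)})(w)
      (∀ (h h' : H) (w : inducedSubspace K H B π L η),
        (TensorProduct.map (LinearMap.id : H →ₗ[K] H)
            (inducedSubspace K H B π L η).subtype)
          (φH (h ⊗ₜ[K] (h' ⊗ₜ[K] w)))
        = h' ⊗ₜ[K] (TensorProduct.map (LinearMap.id : H →ₗ[K] H)
            (η ∘ₗ TensorProduct.mk K B L (π h)) (w : H ⊗[K] L))) ∧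
      -- φ_H is a left H-module structure on H ⊗ L'
      (∀ z : H ⊗[K] (inducedSubspace K H B π L η), φH ((1 : H) ⊗ₜ[K] z) = z) ∧
      (∀ (h h' : H) (z : H ⊗[K] (inducedSubspace K H B π L η)),
        φH (h ⊗ₜ[K] φH (h' ⊗ₜ[K] z)) = φH ((h * h') ⊗ₜ[K] z)) := by
  exact inducedSubspace_consistency_module_structure_general (π : H →ₐ[K] B)
    (algHomOfAction η hη1 hη2) _ _
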